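/- Let s and e be composable labelled transition systems with s eco e, let σ ∈ Utraces(s ∥ e), and let q_s ∈ Q_s, q_e ∈ Q_e. If s ∥ e ==σ==> q_s ∥ q_e, then (s after (σ↾L_s^δ), e after (σ↾L_e^δ)) ∈ R_U(s,e), s ==σ↾L_s^δ==> q_s, and e ==σ↾L_e^δ==> q_e. -/

import Mathlib

/-- Labels extended with the quiescence label `δ`. -/
inductive ELabel (Lab : Type) : Type
  | lab : Lab → ELabel Lab
  | delta : ELabel Lab

namespace ELabel

/-- Membership of an extended label in `𝓛^δ = 𝓛 ∪ {δ}`. -/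
def inL {Lab : Type} (Ls : Set Lab) : ELabel Lab → Prop
  | lab ℓ => ℓ ∈ Ls
  | delta => True

end ELabel

/-- A trace lies in `(𝓛^δ)*`. -/
def TraceIn {Lab : Type} (Ls : Set Lab) (σ : List (ELabel Lab)) : Prop :=
  ∀ x ∈ σ, ELabel.inL Ls x

/-- A labelled transition system.  `T q none q'` is an internal `τ`-step,
`T q (some ℓ) q'` is a step labelled `ℓ`. -/
structure LTS (Q : Type) (Lab : Type) where
  I : Set Lab
  U : Set Lab
  T : Q → Option Lab → Q → Prop
  q0 : Q

namespace LTS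

variable {Q Lab : Type}

/-- The label set `L = I ∪ U`. -/
def L (M : LTS Q Lab) : Set Lab := M.I ∪ M.U

/-- Standing assumptions on all LTSs: countable, disjoint input/output label
sets, transitions labelled within `L`, strong convergence (no infinite
`τ`-sequences), and image-finiteness. -/
def WellFormed (M : LTS Q Lab) : Prop :=
  M.I.Countable ∧ M.U.Countable ∧ Disjoint M.I M.U ∧
  (∀ q ℓ q', M.T q (some ℓ) q' → ℓ ∈ M.L) ∧
  (¬ ∃ f : ℕ → Q, ∀ n, M.T (f n) none (f (n + 1))) ∧
  (∀ q a, {q' | M.T q a q'}.Finite)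

/-- A state is quiescent if neither an output nor `τ` is enabled in it. -/
def Quiescent (M : LTS Q Lab) (q : Q) : Prop :=
  (∀ x ∈ M.U, ∀ q', ¬ M.T q (some x) q') ∧ ∀ q', ¬ M.T q none q'

/-- A single visible step `q --x--> q'` for `x ∈ L^δ`, where the quiescence
label `δ` gives a self-loop at quiescent states. -/
def VStep (M : LTS Q Lab) (q : Q) : ELabel Lab → Q → Prop
  | .lab ℓ, q' => M.T q (some ℓ) q'
  | .delta, q' => q' = q ∧ M.Quiescent q

/-- Zero or more `τ`-steps: `q ==ε==> q'`. -/
def Eps (M : LTS Q Lab) : Q → Q → Prop :=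
  Relation.ReflTransGen fun a b => M.T a none b

/-- Weak transition `q ==σ==> q'` for `σ ∈ (L^δ)*`. -/
inductive W (M : LTS Q Lab) : Q → List (ELabel Lab) → Q → Prop
  | nil {q q' : Q} : M.Eps q q' → W M q [] q'
  | snoc {q q1 q2 q' : Q} {σ : List (ELabel Lab)} {x : ELabel Lab} :
      W M q σ q1 → M.VStep q1 x q2 → M.Eps q2 q' → W M q (σ ++ [x]) q'

/-- `X after σ`, for a set of states `X`. -/
def afterSet (M : LTS Q Lab) (X : Set Q) (σ : List (ELabel Lab)) : Set Q :=
  {q' | ∃ q ∈ X, M.W q σ q'}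

/-- `M after σ`, from the initial state. -/
def after (M : LTS Q Lab) (σ : List (ELabel Lab)) : Set Q :=
  {q' | M.W M.q0 σ q'}

/-- The predicate underlying `out(q) ⊆ U ∪ {δ}`. -/
def outLabel (M : LTS Q Lab) (q : Q) : ELabel Lab → Prop
  | .lab ℓ => ℓ ∈ M.U ∧ ∃ q', M.T q (some ℓ) q'
  | .delta => M.Quiescent q

/-- `out(q)`. -/
def outq (M : LTS Q Lab) (q : Q) : Set (ELabel Lab) :=
  {x | M.outLabel q x}

/-- `in(q) = {ℓ ∈ I | q ==ℓ==>}`. -/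
def inq (M : LTS Q Lab) (q : Q) : Set Lab :=
  {ℓ | ℓ ∈ M.I ∧ ∃ q', M.W q [ELabel.lab ℓ] q'}

/-- `out(X) = ⋃_{q ∈ X} out(q)`. -/
def outSet (M : LTS Q Lab) (X : Set Q) : Set (ELabel Lab) :=
  ⋃ q ∈ X, M.outq q

/-- `in(X) = ⋂_{q ∈ X} in(q)`. -/
def inSet (M : LTS Q Lab) (X : Set Q) : Set Lab :=
  ⋂ q ∈ X, M.inq q

/-- Input-enabledness: `M` is an IOTS. -/
def InputEnabled (M : LTS Q Lab) : Prop :=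
  ∀ q, ∀ ℓ ∈ M.I, ∃ q', M.W q [ELabel.lab ℓ] q'

/-- `Utraces(M)`. -/
def Utraces (M : LTS Q Lab) : Set (List (ELabel Lab)) :=
  {σ | TraceIn M.L σ ∧ (∃ q', M.W M.q0 σ q') ∧
    ∀ σ1 ℓ σ2, σ = σ1 ++ ELabel.lab ℓ :: σ2 → ℓ ∈ M.I →
      ∀ q, M.W M.q0 σ1 q → ∃ q', M.W q [ELabel.lab ℓ] q'}

/-- An LTS is utrace-closed when every trace over `(L^δ)*` that it can
perform is a utrace. -/
def UtraceClosed (M : LTS Q Lab) : Prop :=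
  ∀ σ : List (ELabel Lab), TraceIn M.L σ → (∃ q', M.W M.q0 σ q') → σ ∈ M.Utraces

end LTS

/-- `i uioco s`. -/
def Uioco {Qi Qs Lab : Type} (i : LTS Qi Lab) (s : LTS Qs Lab) : Prop :=
  ∀ σ ∈ s.Utraces, i.outSet (i.after σ) ⊆ s.outSet (s.after σ)

/-- Composability: disjoint output label sets. -/
def Composable {Qs Qe Lab : Type} (s : LTS Qs Lab) (e : LTS Qe Lab) : Prop :=
  s.U ∩ e.U = ∅

/-- Parallel composition `s ∥ e`. -/
def par {Qs Qe Lab : Type} (s : LTS Qs Lab) (e : LTS Qe Lab) : LTS (Qs × Qe) Lab where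
  I := (s.I \ e.U) ∪ (e.I \ s.U)
  U := s.U ∪ e.U
  T := fun p a p' =>
    match a with
    | none =>
        (s.T p.1 none p'.1 ∧ p'.2 = p.2) ∨ (e.T p.2 none p'.2 ∧ p'.1 = p.1)
    | some ℓ =>
        (ℓ ∈ s.L ∧ ℓ ∉ e.L ∧ s.T p.1 (some ℓ) p'.1 ∧ p'.2 = p.2) ∨
        (ℓ ∈ e.L ∧ ℓ ∉ s.L ∧ e.T p.2 (some ℓ) p'.2 ∧ p'.1 = p.1) ∨
        (ℓ ∈ s.L ∧ ℓ ∈ e.L ∧ s.T p.1 (some ℓ) p'.1 ∧ e.T p.2 (some ℓ) p'.2)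
  q0 := (s.q0, e.q0)

/-- `s accepts e`: along utraces of `s ∥ e`, every output of `e` that is an
input of `s` is (weakly) enabled in `s`. -/
def Accepts {Qs Qe Lab : Type} (s : LTS Qs Lab) (e : LTS Qe Lab) : Prop :=
  ∀ σ ∈ (par s e).Utraces, ∀ qs qe, (par s e).W (par s e).q0 σ (qs, qe) →
    ∀ ℓ, ELabel.lab ℓ ∈ e.outq qe → ℓ ∈ s.I → ℓ ∈ s.inq qs

/-- `s mutually accepts e`. -/
def MutuallyAccepts {Qs Qe Lab : Type} (s : LTS Qs Lab) (e : LTS Qe Lab) : Prop :=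
  Accepts s e ∧ Accepts e s

/-- `R` is an ecosim for `s` and `e`. -/
def IsEcosim {Qs Qe Lab : Type} (s : LTS Qs Lab) (e : LTS Qe Lab)
    (R : Set (Set Qs × Set Qe)) : Prop :=
  (s.after [], e.after []) ∈ R ∧
  ∀ Xs Xe, (Xs, Xe) ∈ R →
    (∀ ℓ, ELabel.lab ℓ ∈ e.outSet Xe → ℓ ∈ s.I →
      ℓ ∈ s.inSet Xs ∧
        (s.afterSet Xs [ELabel.lab ℓ], e.afterSet Xe [ELabel.lab ℓ]) ∈ R) ∧
    (∀ ℓ, ELabel.lab ℓ ∈ s.outSet Xs → ℓ ∈ e.I →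
      ℓ ∈ e.inSet Xe ∧
        (s.afterSet Xs [ELabel.lab ℓ], e.afterSet Xe [ELabel.lab ℓ]) ∈ R) ∧
    (∀ ℓ, (ELabel.lab ℓ ∈ e.outSet Xe ∨ ℓ ∈ e.inSet Xe) → ℓ ∉ s.L →
      (Xs, e.afterSet Xe [ELabel.lab ℓ]) ∈ R) ∧
    (∀ ℓ, (ELabel.lab ℓ ∈ s.outSet Xs ∨ ℓ ∈ s.inSet Xs) → ℓ ∉ e.L →
      (s.afterSet Xs [ELabel.lab ℓ], Xe) ∈ R) ∧
    (∀ ℓ, ℓ ∈ s.inSet Xs → ℓ ∈ e.inSet Xe →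
      (s.afterSet Xs [ELabel.lab ℓ], e.afterSet Xe [ELabel.lab ℓ]) ∈ R) ∧
    (ELabel.delta ∈ s.outSet Xs → ELabel.delta ∈ e.outSet Xe →
      (s.afterSet Xs [ELabel.delta], e.afterSet Xe [ELabel.delta]) ∈ R)

/-- `s eco e`: there exists an ecosim for `s` and `e`. -/
def Eco {Qs Qe Lab : Type} (s : LTS Qs Lab) (e : LTS Qe Lab) : Prop :=
  ∃ R, IsEcosim s e R

/-- `R_U(s,e)`: the smallest relation closed under the given rules. -/
inductive RU {Qs Qe Lab : Type} (s : LTS Qs Lab) (e : LTS Qe Lab) :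
    Set Qs → Set Qe → Prop
  | base : RU s e (s.after []) (e.after [])
  | syncOutE {Xs : Set Qs} {Xe : Set Qe} (ℓ : Lab) :
      RU s e Xs Xe → ELabel.lab ℓ ∈ e.outSet Xe → ℓ ∈ s.I →
      RU s e (s.afterSet Xs [ELabel.lab ℓ]) (e.afterSet Xe [ELabel.lab ℓ])
  | syncOutS {Xs : Set Qs} {Xe : Set Qe} (ℓ : Lab) :
      RU s e Xs Xe → ELabel.lab ℓ ∈ s.outSet Xs → ℓ ∈ e.I →
      RU s e (s.afterSet Xs [ELabel.lab ℓ]) (e.afterSet Xe [ELabel.lab ℓ])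
  | internalE {Xs : Set Qs} {Xe : Set Qe} (ℓ : Lab) :
      RU s e Xs Xe → (ELabel.lab ℓ ∈ e.outSet Xe ∨ ℓ ∈ e.inSet Xe) → ℓ ∉ s.L →
      RU s e Xs (e.afterSet Xe [ELabel.lab ℓ])
  | internalS {Xs : Set Qs} {Xe : Set Qe} (ℓ : Lab) :
      RU s e Xs Xe → (ELabel.lab ℓ ∈ s.outSet Xs ∨ ℓ ∈ s.inSet Xs) → ℓ ∉ e.L →
      RU s e (s.afterSet Xs [ELabel.lab ℓ]) Xe
  | syncIn {Xs : Set Qs} {Xe : Set Qe} (ℓ : Lab) :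
      RU s e Xs Xe → ℓ ∈ s.inSet Xs → ℓ ∈ e.inSet Xe →
      RU s e (s.afterSet Xs [ELabel.lab ℓ]) (e.afterSet Xe [ELabel.lab ℓ])
  | qdelta {Xs : Set Qs} {Xe : Set Qe} :
      RU s e Xs Xe → ELabel.delta ∈ s.outSet Xs → ELabel.delta ∈ e.outSet Xe →
      RU s e (s.afterSet Xs [ELabel.delta]) (e.afterSet Xe [ELabel.delta])

open Classical in
/-- Projection `σ↾𝓛^δ` of a trace onto an (extended) label set: keeps `δ`
and the labels in `Ls`, removes all other labels. -/
noncomputable def projD {Lab : Type} (σ : List (ELabel Lab)) (Ls : Set Lab) :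
    List (ELabel Lab) :=
  σ.filter fun x => decide (ELabel.inL Ls x)

open Classical in
/-- Projection `σ↾𝓛` of a trace of plain labels onto a label set. -/
noncomputable def projL {Lab : Type} (σ : List Lab) (Ls : Set Lab) : List Lab :=
  σ.filter fun ℓ => decide (ℓ ∈ Ls)

open Classical in
/-- Substitution `σ[θ/δ]` of the label `θ` by the quiescence label `δ`. -/
noncomputable def substTheta {Lab : Type} (θ : Lab) (σ : List Lab) :
    List (ELabel Lab) :=
  σ.map fun ℓ => if ℓ = θ then ELabel.delta else ELabel.lab ℓ

/-- `⟨X⟩`: componentwise collection of a set of pairs of states. -/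
def collect {Qs Qe : Type} (X : Set (Qs × Qe)) : Set Qs × Set Qe :=
  (Prod.fst '' X, Prod.snd '' X)

/-- `q_s accepts q_e over σ`. -/
def AcceptsOver {Qs Qe Lab : Type} (s : LTS Qs Lab) (e : LTS Qe Lab)
    (qs : Qs) (qe : Qe) (σ : List (ELabel Lab)) : Prop :=
  ∀ σ1 σ2 : List (ELabel Lab), σ1 ++ σ2 = σ →
    ∀ (qs' : Qs) (qe' : Qe), (par s e).W (qs, qe) σ1 (qs', qe') →
      ∀ ℓ, ELabel.lab ℓ ∈ e.outq qe' → ℓ ∈ s.I → ℓ ∈ s.inq qs' ∧ ℓ ∈ e.U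

/-- `q_s mutually accepts q_e over σ`. -/
def MutuallyAcceptsOver {Qs Qe Lab : Type} (s : LTS Qs Lab) (e : LTS Qe Lab)
    (qs : Qs) (qe : Qe) (σ : List (ELabel Lab)) : Prop :=
  AcceptsOver s e qs qe σ ∧ AcceptsOver e s qe qs σ

/-- A test case: a quasi-finite tree-shaped LTS without `τ`-transitions, with
terminal states `pass` and `fail` carrying input self-loops, a special
quiescence-observation input `θ`, at most one output transition per state,
and receptive to all inputs other than `θ`. -/
structure TestCase (Qt Lab : Type) extends LTS Qt Lab where
  passS : Qt
  failS : Qt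
  theta : Lab
  theta_input : theta ∈ I
  no_tau : ∀ q q', ¬ T q none q'
  tree : ∀ q, q ≠ q0 → q ≠ passS → q ≠ failS →
    ∃! p : Qt × Option Lab, T p.1 p.2 q
  pass_loops : ∀ ℓ ∈ I, T passS (some ℓ) passS
  pass_terminal : ∀ a q', T passS a q' → q' = passS ∧ ∃ ℓ ∈ I, a = some ℓ
  fail_loops : ∀ ℓ ∈ I, T failS (some ℓ) failS
  fail_terminal : ∀ a q', T failS a q' → q' = failS ∧ ∃ ℓ ∈ I, a = some ℓ
  one_output : ∀ q ℓ ℓ' q' q'', ℓ ∈ U → ℓ' ∈ U →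
    T q (some ℓ) q' → T q (some ℓ') q'' → ℓ = ℓ' ∧ q' = q''
  receptive : ∀ q, ∀ ℓ ∈ I, ℓ ≠ theta → ∃ q', T q (some ℓ) q'

/-- Test execution `t ⫿ i` of a test case `t` with an implementation `i`. -/
def testExec {Qt Qi Lab : Type} (t : TestCase Qt Lab) (i : LTS Qi Lab) :
    LTS (Qt × Qi) Lab where
  I := ∅
  U := i.U ∪ (t.toLTS.L \ {t.theta})
  T := fun p a p' =>
    match a with
    | none => i.T p.2 none p'.2 ∧ p'.1 = p.1
    | some ℓ =>
        (ℓ ∈ i.L ∧ ℓ ∉ t.toLTS.L ∧ i.T p.2 (some ℓ) p'.2 ∧ p'.1 = p.1) ∨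
        (ℓ ∈ t.toLTS.L ∧ ℓ ∉ i.L ∧ ℓ ≠ t.theta ∧ t.T p.1 (some ℓ) p'.1 ∧ p'.2 = p.2) ∨
        (ℓ ∈ i.L ∧ ℓ ∈ t.toLTS.L ∧ t.T p.1 (some ℓ) p'.1 ∧ i.T p.2 (some ℓ) p'.2) ∨
        (ℓ = t.theta ∧ t.T p.1 (some ℓ) p'.1 ∧ p'.2 = p.2 ∧ i.Quiescent p.2)
  q0 := (t.q0, i.q0)

namespace LTS

variable {Q Lab : Type}

theorem W_snoc_iff (M : LTS Q Lab) {q q' : Q} {σ : List (ELabel Lab)} {x : ELabel Lab} :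
    M.W q (σ ++ [x]) q' ↔ ∃ a b, M.W q σ a ∧ M.VStep a x b ∧ M.Eps b q' := by
  constructor
  · intro h
    generalize hτ : σ ++ [x] = τ at h
    cases h with
    | nil h => simp at hτ
    | snoc h1 h2 h3 =>
      obtain ⟨rfl, h⟩ := List.append_inj' hτ rfl
      simp only [List.cons.injEq, and_true] at h
      subst h
      exact ⟨_, _, h1, h2, h3⟩
  · rintro ⟨a, b, h1, h2, h3⟩
    exact W.snoc h1 h2 h3

theorem W_nil_iff (M : LTS Q Lab) {q q' : Q} : M.W q [] q' ↔ M.Eps q q' := by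
  constructor
  · intro h
    generalize hτ : ([] : List (ELabel Lab)) = τ at h
    cases h with
    | nil h => exact h
    | snoc h1 h2 h3 => simp at hτ
  · exact W.nil

theorem W_single_iff (M : LTS Q Lab) {q q' : Q} {x : ELabel Lab} :
    M.W q [x] q' ↔ ∃ a b, M.Eps q a ∧ M.VStep a x b ∧ M.Eps b q' := by
  have := M.W_snoc_iff (q := q) (q' := q') (σ := []) (x := x)
  simpa only [List.nil_append, W_nil_iff] using this

theorem W_eps (M : LTS Q Lab) {q a b : Q} {σ : List (ELabel Lab)} (h : M.W q σ a)
    (h' : M.Eps a b) : M.W q σ b := by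
  cases h with
  | nil h => exact W.nil (Relation.ReflTransGen.trans h h')
  | snoc h1 h2 h3 => exact W.snoc h1 h2 (Relation.ReflTransGen.trans h3 h')

theorem after_snoc (M : LTS Q Lab) (σ : List (ELabel Lab)) (x : ELabel Lab) :
    M.after (σ ++ [x]) = M.afterSet (M.after σ) [x] := by
  ext q
  simp only [after, afterSet, Set.mem_ofPred_eq, W_snoc_iff, W_single_iff]
  constructor
  · rintro ⟨a, b, h1, h2, h3⟩
    exact ⟨a, h1, a, b, Relation.ReflTransGen.refl, h2, h3⟩
  · rintro ⟨c, h0, a, b, h1, h2, h3⟩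
    exact ⟨a, b, M.W_eps h0 h1, h2, h3⟩

theorem Utraces_prefix (M : LTS Q Lab) {σ : List (ELabel Lab)} {x : ELabel Lab}
    (h : σ ++ [x] ∈ M.Utraces) : σ ∈ M.Utraces := by
  obtain ⟨h1, ⟨q, h2⟩, h3⟩ := h
  refine ⟨fun y hy => h1 y (by simp [hy]), ?_, ?_⟩
  · obtain ⟨a, b, h, -⟩ := M.W_snoc_iff.1 h2
    exact ⟨a, h⟩
  · intro σ1 ℓ σ2 he
    exact h3 σ1 ℓ (σ2 ++ [x]) (by simp [he])

/-- Labelled steps out of a state without internal steps. -/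
theorem step_of_stable (M : LTS Q Lab) {q : Q} {ℓ : Lab} (hq : ∀ q', ¬ M.T q none q')
    (h : ∃ q', M.W q [ELabel.lab ℓ] q') : ∃ q', M.T q (some ℓ) q' := by
  obtain ⟨q', h⟩ := h
  obtain ⟨a, b, h1, h2, -⟩ := M.W_single_iff.1 h
  rcases Relation.ReflTransGen.cases_head h1 with rfl | ⟨c, hc, -⟩
  · exact ⟨b, h2⟩
  · exact absurd hc (hq c)

theorem mem_inSet (M : LTS Q Lab) {X : Set Q} {ℓ : Lab} :
    ℓ ∈ M.inSet X ↔ ∀ q ∈ X, ℓ ∈ M.I ∧ ∃ q', M.W q [ELabel.lab ℓ] q' := by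
  simp [inSet, inq]

theorem mem_outSet (M : LTS Q Lab) {X : Set Q} {x : ELabel Lab} :
    x ∈ M.outSet X ↔ ∃ q ∈ X, M.outLabel q x := by
  simp [outSet, outq]

end LTS

theorem projD_snoc_pos {Lab : Type} (σ : List (ELabel Lab)) (x : ELabel Lab) {Ls : Set Lab}
    (h : ELabel.inL Ls x) : projD (σ ++ [x]) Ls = projD σ Ls ++ [x] := by
  simp [projD, h]

theorem projD_snoc_neg {Lab : Type} (σ : List (ELabel Lab)) (x : ELabel Lab) {Ls : Set Lab}
    (h : ¬ ELabel.inL Ls x) : projD (σ ++ [x]) Ls = projD σ Ls := by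
  simp [projD, h]

section par
variable {Qs Qe Lab : Type} (s : LTS Qs Lab) (e : LTS Qe Lab)

theorem par_eps_fst {p p' : Qs × Qe} (h : (par s e).Eps p p') :
    s.Eps p.1 p'.1 ∧ e.Eps p.2 p'.2 := by
  induction h with
  | refl => exact ⟨Relation.ReflTransGen.refl, Relation.ReflTransGen.refl⟩
  | tail h1 h2 ih =>
    rcases h2 with ⟨h, h'⟩ | ⟨h, h'⟩
    · exact ⟨ih.1.tail h, h' ▸ ih.2⟩
    · exact ⟨h' ▸ ih.1, ih.2.tail h⟩

theorem par_eps_mk {a a' : Qs} {b b' : Qe} (h : s.Eps a a') (h' : e.Eps b b') :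
    (par s e).Eps (a, b) (a', b') := by
  have h1 : (par s e).Eps (a, b) (a', b) := by
    induction h with
    | refl => exact Relation.ReflTransGen.refl
    | tail _ h2 ih => exact Relation.ReflTransGen.tail ih (Or.inl ⟨h2, rfl⟩)
  have h2 : (par s e).Eps (a', b) (a', b') := by
    clear h1
    induction h' with
    | refl => exact Relation.ReflTransGen.refl
    | tail _ h2 ih => exact Relation.ReflTransGen.tail ih (Or.inr ⟨h2, rfl⟩)
  exact Relation.ReflTransGen.trans h1 h2

theorem par_quiescent {a : Qs} {b : Qe} (ha : s.Quiescent a) (hb : e.Quiescent b) :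
    (par s e).Quiescent (a, b) := by
  refine ⟨?_, ?_⟩
  · rintro x hx p (⟨h1, h2, h3, -⟩ | ⟨h1, h2, h3, -⟩ | ⟨h1, h2, h3, h4⟩)
    · rcases hx with hx | hx
      · exact ha.1 x hx _ h3
      · exact h2 (Or.inr hx)
    · rcases hx with hx | hx
      · exact h2 (Or.inr hx)
      · exact hb.1 x hx _ h3
    · rcases hx with hx | hx
      · exact ha.1 x hx _ h3
      · exact hb.1 x hx _ h4
  · rintro p (⟨h, -⟩ | ⟨h, -⟩)
    · exact ha.2 _ h
    · exact hb.2 _ h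

theorem par_W_mk {a : Qs} {b : Qe} (σ : List (ELabel Lab)) (hσ : TraceIn (par s e).L σ) :
    ∀ a' b', s.W a (projD σ s.L) a' → e.W b (projD σ e.L) b' →
      (par s e).W (a, b) σ (a', b') := by
  induction σ using List.reverseRecOn with
  | nil =>
    intro a' b' h1 h2
    exact LTS.W.nil (par_eps_mk s e (s.W_nil_iff.1 h1) (e.W_nil_iff.1 h2))
  | append_singleton σ x ih =>
    have ih := ih (fun y hy => hσ y (by simp [hy]))
    have hx := hσ x (by simp)
    intro a' b' h1 h2
    cases x with
    | delta =>
      rw [projD_snoc_pos _ _ (by exact trivial), LTS.W_snoc_iff] at h1 h2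
      obtain ⟨a1, _, h11, ⟨rfl, h12⟩, h13⟩ := h1
      obtain ⟨b1, _, h21, ⟨rfl, h22⟩, h23⟩ := h2
      exact LTS.W.snoc (ih _ _ h11 h21) ⟨rfl, par_quiescent s e h12 h22⟩ (par_eps_mk s e h13 h23)
    | lab ℓ =>
      by_cases hls : ℓ ∈ s.L <;> by_cases hle : ℓ ∈ e.L
      · rw [projD_snoc_pos _ _ (by exact hls), LTS.W_snoc_iff] at h1
        rw [projD_snoc_pos _ _ (by exact hle), LTS.W_snoc_iff] at h2
        obtain ⟨a1, a2, h11, h12, h13⟩ := h1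
        obtain ⟨b1, b2, h21, h22, h23⟩ := h2
        refine LTS.W.snoc (q2 := (a2, b2)) (ih _ _ h11 h21) ?_ (par_eps_mk s e h13 h23)
        exact Or.inr (Or.inr ⟨hls, hle, h12, h22⟩)
      · rw [projD_snoc_pos _ _ (by exact hls), LTS.W_snoc_iff] at h1
        rw [projD_snoc_neg _ _ (by exact hle)] at h2
        obtain ⟨a1, a2, h11, h12, h13⟩ := h1
        refine LTS.W.snoc (q2 := (a2, b')) (ih _ _ h11 h2) ?_
          (par_eps_mk s e h13 Relation.ReflTransGen.refl)
        exact Or.inl ⟨hls, hle, h12, rfl⟩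
      · rw [projD_snoc_neg _ _ (by exact hls)] at h1
        rw [projD_snoc_pos _ _ (by exact hle), LTS.W_snoc_iff] at h2
        obtain ⟨b1, b2, h21, h22, h23⟩ := h2
        refine LTS.W.snoc (q2 := (a', b2)) (ih _ _ h1 h21) ?_
          (par_eps_mk s e Relation.ReflTransGen.refl h23)
        exact Or.inr (Or.inl ⟨hle, hls, h22, rfl⟩)
      · exfalso
        rcases hx with (h | h) | (h | h)
        · exact hls (Or.inl h.1)
        · exact hle (Or.inl h.1)
        · exact hls (Or.inr h)
        · exact hle (Or.inr h)

theorem par_W_single {p : Qs × Qe} {ℓ : Lab} (h : ∃ p', (par s e).W p [ELabel.lab ℓ] p') :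
    (ℓ ∈ s.L → ∃ q', s.W p.1 [ELabel.lab ℓ] q') ∧
    (ℓ ∈ e.L → ∃ q', e.W p.2 [ELabel.lab ℓ] q') := by
  obtain ⟨p', h⟩ := h
  obtain ⟨c, d, h1, h2, h3⟩ := (par s e).W_single_iff.1 h
  have h1 := par_eps_fst s e h1
  have h3 := par_eps_fst s e h3
  rcases h2 with ⟨h4, h5, h6, h7⟩ | ⟨h4, h5, h6, h7⟩ | ⟨h4, h5, h6, h7⟩
  · exact ⟨fun _ => ⟨_, s.W_single_iff.2 ⟨_, _, h1.1, h6, h3.1⟩⟩, fun h => absurd h h5⟩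
  · exact ⟨fun h => absurd h h5, fun _ => ⟨_, e.W_single_iff.2 ⟨_, _, h1.2, h6, h3.2⟩⟩⟩
  · exact ⟨fun _ => ⟨_, s.W_single_iff.2 ⟨_, _, h1.1, h6, h3.1⟩⟩,
      fun _ => ⟨_, e.W_single_iff.2 ⟨_, _, h1.2, h7, h3.2⟩⟩⟩

theorem RU_sub {R : Set (Set Qs × Set Qe)} (hR : IsEcosim s e R) {Xs : Set Qs} {Xe : Set Qe}
    (h : RU s e Xs Xe) : (Xs, Xe) ∈ R := by
  induction h with
  | base => exact hR.1
  | syncOutE ℓ _ h1 h2 ih => exact ((hR.2 _ _ ih).1 ℓ h1 h2).2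
  | syncOutS ℓ _ h1 h2 ih => exact ((hR.2 _ _ ih).2.1 ℓ h1 h2).2
  | internalE ℓ _ h1 h2 ih => exact (hR.2 _ _ ih).2.2.1 ℓ h1 h2
  | internalS ℓ _ h1 h2 ih => exact (hR.2 _ _ ih).2.2.2.1 ℓ h1 h2
  | syncIn ℓ _ h1 h2 ih => exact (hR.2 _ _ ih).2.2.2.2.1 ℓ h1 h2
  | qdelta _ h1 h2 ih => exact (hR.2 _ _ ih).2.2.2.2.2 h1 h2

/-- Under `s eco e`, quiescence of the composition gives quiescence of the components. -/
theorem quiescent_of_par (hcomp : Composable s e) (heco : Eco s e)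
    {Xs : Set Qs} {Xe : Set Qe} (hRU : RU s e Xs Xe) {a : Qs} {b : Qe}
    (ha : a ∈ Xs) (hb : b ∈ Xe) (h : (par s e).Quiescent (a, b)) :
    s.Quiescent a ∧ e.Quiescent b := by
  obtain ⟨R, hR⟩ := heco
  have hX := hR.2 _ _ (RU_sub s e hR hRU)
  have ta : ∀ q', ¬ s.T a none q' := fun q' hq => h.2 (q', b) (Or.inl ⟨hq, rfl⟩)
  have tb : ∀ q', ¬ e.T b none q' := fun q' hq => h.2 (a, q') (Or.inr ⟨hq, rfl⟩)
  refine ⟨⟨fun x hx q' hq => ?_, ta⟩, ⟨fun x hx q' hq => ?_, tb⟩⟩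
  · by_cases hxe : x ∈ e.L
    · have hxI : x ∈ e.I := by
        rcases hxe with h' | h'
        · exact h'
        · exact absurd (show x ∈ s.U ∩ e.U from ⟨hx, h'⟩) (by rw [hcomp]; simp)
      have := (hX.2.1 x (s.mem_outSet.2 ⟨a, ha, hx, q', hq⟩) hxI).1
      obtain ⟨b', hb'⟩ := e.step_of_stable tb ((e.mem_inSet.1 this b hb).2)
      exact h.1 x (Or.inl hx) (q', b') (Or.inr (Or.inr ⟨Or.inr hx, hxe, hq, hb'⟩))
    · exact h.1 x (Or.inl hx) (q', b) (Or.inl ⟨Or.inr hx, hxe, hq, rfl⟩)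
  · by_cases hxs : x ∈ s.L
    · have hxI : x ∈ s.I := by
        rcases hxs with h' | h'
        · exact h'
        · exact absurd (show x ∈ s.U ∩ e.U from ⟨h', hx⟩) (by rw [hcomp]; simp)
      have := (hX.1 x (e.mem_outSet.2 ⟨b, hb, hx, q', hq⟩) hxI).1
      obtain ⟨a', ha'⟩ := s.step_of_stable ta ((s.mem_inSet.1 this a ha).2)
      exact h.1 x (Or.inr hx) (a', q') (Or.inr (Or.inr ⟨hxs, Or.inr hx, ha', hq⟩))
    · exact h.1 x (Or.inr hx) (a, q') (Or.inr (Or.inl ⟨Or.inr hx, hxs, hq, rfl⟩))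

end par

/-- for composable `s`, `e` with `s eco e` and a utrace `σ` of
`s ∥ e` with `s ∥ e ==σ==> q_s ∥ q_e`, the pair of projected aftersets is in
`R_U(s,e)` and both components reach their states along the projections. -/
theorem once_in_RU_always_in_RU {Qs Qe Lab : Type}
    (s : LTS Qs Lab) (e : LTS Qe Lab)
    (hs : s.WellFormed) (he : e.WellFormed)
    (hcomp : Composable s e) (heco : Eco s e)
    (σ : List (ELabel Lab)) (hσ : σ ∈ (par s e).Utraces)
    (qs : Qs) (qe : Qe)
    (hw : (par s e).W (par s e).q0 σ (qs, qe)) :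
    RU s e (s.after (projD σ s.L)) (e.after (projD σ e.L)) ∧
      s.W s.q0 (projD σ s.L) qs ∧ e.W e.q0 (projD σ e.L) qe := by
  induction σ using List.reverseRecOn generalizing qs qe with
  | nil =>
    have h := par_eps_fst s e ((par s e).W_nil_iff.1 hw)
    exact ⟨RU.base, LTS.W.nil h.1, LTS.W.nil h.2⟩
  | append_singleton σ x ih =>
    have hσ' := (par s e).Utraces_prefix hσ
    obtain ⟨⟨a, b⟩, ⟨c, d⟩, hw1, hst, heps⟩ := (par s e).W_snoc_iff.1 hw
    obtain ⟨hRU, hWs, hWe⟩ := ih hσ' a b hw1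
    have heps := par_eps_fst s e heps
    cases x with
    | delta =>
      obtain ⟨hcd, hq⟩ := hst
      cases hcd
      obtain ⟨qa, qb⟩ := quiescent_of_par s e hcomp heco hRU hWs hWe hq
      rw [projD_snoc_pos _ _ (by exact trivial), projD_snoc_pos _ _ (by exact trivial), LTS.after_snoc, LTS.after_snoc]
      exact ⟨RU.qdelta hRU (s.mem_outSet.2 ⟨a, hWs, qa⟩) (e.mem_outSet.2 ⟨b, hWe, qb⟩),
        LTS.W.snoc hWs ⟨rfl, qa⟩ heps.1, LTS.W.snoc hWe ⟨rfl, qb⟩ heps.2⟩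
    | lab ℓ =>
      have hpar : ℓ ∈ (par s e).I → ∀ a' b', s.W s.q0 (projD σ s.L) a' →
          e.W e.q0 (projD σ e.L) b' → ∃ p', (par s e).W (a', b') [ELabel.lab ℓ] p' :=
        fun hI a' b' h1 h2 => hσ.2.2 σ ℓ [] rfl hI (a', b') (par_W_mk s e σ hσ'.1 a' b' h1 h2)
      rcases hst with ⟨h4, h5, h6, h7⟩ | ⟨h4, h5, h6, h7⟩ | ⟨h4, h5, h6, h7⟩
      · rw [projD_snoc_pos _ _ (by exact h4), projD_snoc_neg _ _ (by exact h5), LTS.after_snoc]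
        simp only at h7
        subst h7
        refine ⟨RU.internalS ℓ hRU ?_ h5, LTS.W.snoc hWs h6 heps.1, e.W_eps hWe heps.2⟩
        rcases h4 with hI | hU
        · refine Or.inr (s.mem_inSet.2 fun q hq => ⟨hI, ?_⟩)
          exact (par_W_single s e
            (hpar (Or.inl ⟨hI, fun h => h5 (Or.inr h)⟩) q _ hq hWe)).1 (Or.inl hI)
        · exact Or.inl (s.mem_outSet.2 ⟨a, hWs, hU, _, h6⟩)
      · rw [projD_snoc_neg _ _ (by exact h5), projD_snoc_pos _ _ (by exact h4), LTS.after_snoc]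
        simp only at h7
        subst h7
        refine ⟨RU.internalE ℓ hRU ?_ h5, s.W_eps hWs heps.1, LTS.W.snoc hWe h6 heps.2⟩
        rcases h4 with hI | hU
        · refine Or.inr (e.mem_inSet.2 fun q hq => ⟨hI, ?_⟩)
          exact (par_W_single s e
            (hpar (Or.inr ⟨hI, fun h => h5 (Or.inr h)⟩) _ q hWs hq)).2 (Or.inl hI)
        · exact Or.inl (e.mem_outSet.2 ⟨b, hWe, hU, _, h6⟩)
      · rw [projD_snoc_pos _ _ (by exact h4), projD_snoc_pos _ _ (by exact h5), LTS.after_snoc,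
          LTS.after_snoc]
        refine ⟨?_, LTS.W.snoc hWs h6 heps.1, LTS.W.snoc hWe h7 heps.2⟩
        by_cases hsU : ℓ ∈ s.U
        · refine RU.syncOutS ℓ hRU (s.mem_outSet.2 ⟨a, hWs, hsU, _, h6⟩) ?_
          rcases h5 with h | h
          · exact h
          · exact absurd (show ℓ ∈ s.U ∩ e.U from ⟨hsU, h⟩) (by rw [hcomp]; simp)
        · have hsI : ℓ ∈ s.I := h4.resolve_right hsU
          by_cases heU : ℓ ∈ e.U
          · exact RU.syncOutE ℓ hRU (e.mem_outSet.2 ⟨b, hWe, heU, _, h7⟩) hsI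
          · have heI : ℓ ∈ e.I := h5.resolve_right heU
            have hI : ℓ ∈ (par s e).I := Or.inl ⟨hsI, heU⟩
            exact RU.syncIn ℓ hRU
              (s.mem_inSet.2 fun q hq => ⟨hsI, (par_W_single s e (hpar hI q _ hq hWe)).1 h4⟩)
              (e.mem_inSet.2 fun q hq => ⟨heI, (par_W_single s e (hpar hI _ q hWs hq)).2 h5⟩)
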